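/- arXiv:2410.22104 — 3 statements merged into one kernel-verified Lean document; each statement's English description precedes it below -/
import Mathlib

section
/- Fix β > -1 and n ∈ ℕ. Then the normalized Jacobi polynomials satisfy lim_{α→∞} p_n^{(α,β)}(cos 2θ) = (cos θ)^{2n} uniformly in θ ∈ [0, π/2]; that is, for every ε > 0 there exists A such that for all α > A and all θ ∈ [0, π/2], |p_n^{(α,β)}(cos 2θ) - (cos θ)^{2n}| < ε. -/
/-- The normalized Jacobi polynomial `p_n^{(α,β)}` evaluated at `cos 2θ`, via its
explicit expansion in powers of `cos²θ` and `sin²θ`. -/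
noncomputable def pJacobiCos (α β : ℝ) (n : ℕ) (θ : ℝ) : ℝ :=
  ∑ m ∈ Finset.range (n + 1),
    (-1 : ℝ) ^ (n - m) * (n.choose m) *
      (Real.Gamma (β + n + 1) / Real.Gamma (β + m + 1)) *
      (Real.Gamma (α + 1) / Real.Gamma (α + ((n : ℝ) - m) + 1)) *
      (Real.cos θ ^ 2) ^ m * (Real.sin θ ^ 2) ^ (n - m)

/-!
As `α → ∞` the coefficient of `cos²ᵐθ sin²⁽ⁿ⁻ᵐ⁾θ` in the Jacobi polynomial tends to `0` for `m < n`,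
because `Γ(s) / Γ(s + k)` is the reciprocal of the degree `k` polynomial `s (s + 1) ⋯ (s + k - 1)`,
and tends to `1` for `m = n`. The functions `cos²ᵐθ sin²⁽ⁿ⁻ᵐ⁾θ` are bounded by `1`, so convergence
of the finitely many coefficients gives uniform convergence.
-/

open Filter Topology

theorem tendstoUniformly_sum_smul {ι γ X R E : Type*} [SeminormedRing R]
    [SeminormedAddCommGroup E] [Module R E] [IsBoundedSMul R E] {l : Filter γ} {s : Finset ι}
    {c : γ → ι → R} {c₀ : ι → R} {f : ι → X → E} {C : ι → ℝ}
    (hc : ∀ i ∈ s, Tendsto (fun a ↦ c a i) l (𝓝 (c₀ i))) (hf : ∀ i ∈ s, ∀ x, ‖f i x‖ ≤ C i) :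
    TendstoUniformly (fun a x ↦ ∑ i ∈ s, c a i • f i x) (fun x ↦ ∑ i ∈ s, c₀ i • f i x) l := by
  have hbound : Tendsto (fun a ↦ ∑ i ∈ s, ‖c a i - c₀ i‖ * C i) l (𝓝 0) := by
    simpa using tendsto_finsetSum s fun i hi ↦
      (tendsto_iff_norm_sub_tendsto_zero.mp (hc i hi)).mul_const (C i)
  refine Metric.tendstoUniformly_iff.mpr fun ε hε ↦ ?_
  filter_upwards [hbound.eventually_lt_const hε] with a ha x
  calc dist (∑ i ∈ s, c₀ i • f i x) (∑ i ∈ s, c a i • f i x)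
      = ‖∑ i ∈ s, (c a i - c₀ i) • f i x‖ := by
        rw [dist_comm, dist_eq_norm]
        simp only [sub_smul, Finset.sum_sub_distrib]
    _ ≤ ∑ i ∈ s, ‖c a i - c₀ i‖ * C i := norm_sum_le_of_le s fun i hi ↦
        (norm_smul_le _ _).trans (mul_le_mul_of_nonneg_left (hf i hi x) (norm_nonneg _))
    _ < ε := ha

theorem Gamma_add_natCast_div_Gamma {s : ℝ} (hs : ∀ m : ℕ, s ≠ -m) (k : ℕ) :
    Real.Gamma (s + k) / Real.Gamma s = (ascPochhammer ℝ k).eval s := by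
  apply Complex.ofReal_injective
  have hs' (m : ℕ) : (s : ℂ) ≠ -m := mod_cast hs m
  rw [← Complex.ofRealHom_eq_coe (Polynomial.eval _ _), ← Polynomial.eval_map_apply,
    ascPochhammer_map, Complex.ofRealHom_eq_coe, ← Complex.Gamma_add_nat_div_Gamma_eq _ hs',
    Complex.ofReal_div, ← Complex.Gamma_ofReal, ← Complex.Gamma_ofReal, Complex.ofReal_add,
    Complex.ofReal_natCast]

theorem tendsto_ascPochhammer_eval_atTop {k : ℕ} (hk : k ≠ 0) :
    Tendsto (fun s : ℝ ↦ (ascPochhammer ℝ k).eval s) atTop atTop := by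
  refine Polynomial.tendsto_atTop_of_leadingCoeff_nonneg _ ?_ ?_
  · rw [← Polynomial.natDegree_pos_iff_degree_pos, ascPochhammer_natDegree]
    exact hk.pos
  · rw [monic_ascPochhammer]
    exact zero_le_one

theorem tendsto_Gamma_div_Gamma_add_natCast {k : ℕ} (hk : k ≠ 0) :
    Tendsto (fun s : ℝ ↦ Real.Gamma s / Real.Gamma (s + k)) atTop (𝓝 0) := by
  refine (tendsto_ascPochhammer_eval_atTop hk).inv_tendsto_atTop.congr' ?_
  filter_upwards [eventually_gt_atTop 0] with s hs
  have hs_pole (m : ℕ) : s ≠ -m := ((neg_nonpos.mpr m.cast_nonneg).trans_lt hs).ne'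
  rw [Pi.inv_apply, ← Gamma_add_natCast_div_Gamma hs_pole, inv_div]

theorem norm_cos_sq_pow_mul_sin_sq_pow_le_one (i j : ℕ) (θ : ℝ) :
    ‖(Real.cos θ ^ 2) ^ i * (Real.sin θ ^ 2) ^ j‖ ≤ 1 := by
  rw [Real.norm_of_nonneg (by positivity)]
  exact mul_le_one₀ (pow_le_one₀ (sq_nonneg _) (Real.cos_sq_le_one θ)) (by positivity)
    (pow_le_one₀ (sq_nonneg _) (Real.sin_sq_le_one θ))

/-- The coefficient of `(cos²θ)ᵐ (sin²θ)ⁿ⁻ᵐ` in the expansion of `p_n^{(α,β)}(cos 2θ)`, isolated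
because it carries all the dependence on `α`. -/
noncomputable def pJacobiCosCoeff (α β : ℝ) (n m : ℕ) : ℝ :=
  (-1 : ℝ) ^ (n - m) * (n.choose m) *
    (Real.Gamma (β + n + 1) / Real.Gamma (β + m + 1)) *
    (Real.Gamma (α + 1) / Real.Gamma (α + ((n : ℝ) - m) + 1))

theorem pJacobiCos_eq_sum_coeff (α β : ℝ) (n : ℕ) (θ : ℝ) :
    pJacobiCos α β n θ = ∑ m ∈ Finset.range (n + 1),
      pJacobiCosCoeff α β n m • ((Real.cos θ ^ 2) ^ m * (Real.sin θ ^ 2) ^ (n - m)) := by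
  simp only [pJacobiCos, pJacobiCosCoeff, smul_eq_mul, mul_assoc]

theorem tendsto_pJacobiCosCoeff_of_lt (β : ℝ) {n m : ℕ} (hmn : m < n) :
    Tendsto (fun α ↦ pJacobiCosCoeff α β n m) atTop (𝓝 0) := by
  have hratio : Tendsto (fun α : ℝ ↦ Real.Gamma (α + 1) / Real.Gamma (α + ((n : ℝ) - m) + 1))
      atTop (𝓝 0) := by
    refine ((tendsto_Gamma_div_Gamma_add_natCast (Nat.sub_ne_zero_of_lt hmn)).comp
      (tendsto_atTop_add_const_right atTop 1 tendsto_id)).congr fun α ↦ ?_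
    simp only [Function.comp_apply, id, Nat.cast_sub hmn.le, add_right_comm]
  simpa only [pJacobiCosCoeff, mul_zero] using hratio.const_mul
    ((-1 : ℝ) ^ (n - m) * n.choose m * (Real.Gamma (β + n + 1) / Real.Gamma (β + m + 1)))

theorem pJacobiCosCoeff_self {α β : ℝ} {n : ℕ} (hα : Real.Gamma (α + 1) ≠ 0)
    (hβ : Real.Gamma (β + n + 1) ≠ 0) : pJacobiCosCoeff α β n n = 1 := by
  simp [pJacobiCosCoeff, hα, hβ]

theorem tendsto_pJacobiCosCoeff {β : ℝ} {n m : ℕ} (hβ : Real.Gamma (β + n + 1) ≠ 0) (hmn : m ≤ n) :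
    Tendsto (fun α ↦ pJacobiCosCoeff α β n m) atTop (𝓝 (if m = n then 1 else 0)) := by
  rcases hmn.lt_or_eq with hlt | rfl
  · simpa only [hlt.ne, if_false] using tendsto_pJacobiCosCoeff_of_lt β hlt
  · rw [if_pos rfl]
    refine tendsto_const_nhds.congr' ?_
    filter_upwards [eventually_gt_atTop (-1)] with α hα
    exact (pJacobiCosCoeff_self (Real.Gamma_pos_of_pos (by linarith)).ne' hβ).symm

theorem jacobi_uniform_limit_general {β : ℝ} (hβ : ∀ k : ℕ, β ≠ -(k + 1)) (n : ℕ) :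
    TendstoUniformly (fun α θ ↦ pJacobiCos α β n θ) (fun θ ↦ Real.cos θ ^ (2 * n)) atTop := by
  have hΓ : Real.Gamma (β + n + 1) ≠ 0 := Real.Gamma_ne_zero fun k hk ↦
    hβ (n + k) (by push_cast; linarith)
  have hlim := tendstoUniformly_sum_smul (s := Finset.range (n + 1))
    (fun m hm ↦ tendsto_pJacobiCosCoeff hΓ (Finset.mem_range_succ_iff.mp hm))
    (fun m _ θ ↦ norm_cos_sq_pow_mul_sin_sq_pow_le_one m (n - m) θ)
  simpa [pJacobiCos_eq_sum_coeff, ite_smul, Finset.sum_ite_eq', pow_mul] using hlim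

theorem jacobi_uniform_limit (β : ℝ) (hβ : -1 < β) (n : ℕ) :
    ∀ ε : ℝ, 0 < ε → ∃ A : ℝ, ∀ α : ℝ, A < α →
      ∀ θ ∈ Set.Icc (0 : ℝ) (Real.pi / 2),
        |pJacobiCos α β n θ - Real.cos θ ^ (2 * n)| < ε := by
  intro ε hε
  have hβ_pole (k : ℕ) : β ≠ -(k + 1) := by linarith [k.cast_nonneg (α := ℝ)]
  obtain ⟨A, hA⟩ := eventually_atTop.mp
    (Metric.tendstoUniformly_iff.mp (jacobi_uniform_limit_general hβ_pole n) ε hε)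
  exact ⟨A, fun α hα θ _ ↦ (abs_sub_comm _ _).trans_lt (hA α hα.le θ)⟩
end

section
/- Let β ≥ 0 or β = -1/2, let α > β, n ≥ 1, and 0 < θ₀ ≤ π/2. Then for every θ with θ₀ ≤ θ ≤ π/2, the normalized Jacobi polynomial satisfies |p_n^{(α,β)}(cos 2θ)| ≤ Γ(α+1) / (Γ(β+1) (n sin²θ₀)^{α-β}). -/
open Finset Polynomial MeasureTheory ProbabilityTheory Filter
open scoped Topology

/-!
Write `x = sin² θ` and let `P x` be the Jacobi polynomial at `cos 2θ = 1 - 2x`. The point is that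
`x ^ (α - β) * |P x|` is largest on `(0, 1]` at the endpoint `x = 1`, where it equals
`Γ (β + n + 1) Γ (α + 1) / (Γ (β + 1) Γ (α + n + 1))`.

For `β ≥ 0`, Bateman's integral writes `P` as a Beta average of the symmetric form (`α = β`), which
is at most `(c + s) ^ n` by Sonin's method, its symmetry and its homogeneity; at `x = 1` the
resulting majorant is attained. For `-1/2 ≤ β ≤ 0` and `α ≥ 2β + 1/2`, Sonin's method applies
directly to `x ^ (α - β) * P x`.

Finally, `Γ (y + 1/2 + l) / (Γ (y + 1/2) * y ^ l)` decreases to `1` along `y, y + 1, y + 2, …`,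
whence `Γ (β + n + 1) * n ^ (α - β) ≤ Γ (α + n + 1)`.
-/

/-- The coefficient of `(cos² θ) ^ m * (sin² θ) ^ k` in the Jacobi polynomial of degree `m + k`.
Indexing by both exponents instead of the degree and one exponent avoids subtraction. -/
noncomputable def jacobiCoeff (α β : ℝ) (m k : ℕ) : ℝ :=
  (-1) ^ k * ((m + k).choose m) *
    (Real.Gamma (β + (m + k : ℕ) + 1) / Real.Gamma (β + m + 1)) *
    (Real.Gamma (α + 1) / Real.Gamma (α + k + 1))

/-- The homogeneous form of degree `n` in `c = cos² θ` and `s = sin² θ` that restricts to the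
normalized Jacobi polynomial on the line `c + s = 1`. It is defined over every real algebra so that
it can be evaluated both at real numbers and at polynomials. -/
noncomputable def jacobiForm {A : Type*} [CommSemiring A] [Algebra ℝ A]
    (α β : ℝ) (n : ℕ) (c s : A) : A :=
  ∑ p ∈ antidiagonal n, jacobiCoeff α β p.1 p.2 • (c ^ p.1 * s ^ p.2)

/-- The normalized Jacobi polynomial `p_n^{(α,β)}` in the variable `x = sin² θ`, so that
`cos 2θ = 1 - 2x`. -/
noncomputable def jacobiPoly (α β : ℝ) (n : ℕ) : ℝ[X] :=
  jacobiForm α β n (1 - X) X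

lemma jacobiPoly_eval (α β : ℝ) (n : ℕ) (x : ℝ) :
    (jacobiPoly α β n).eval x = jacobiForm α β n (1 - x) x := by
  simp [jacobiPoly, jacobiForm, eval_finsetSum]

lemma pJacobiCos_eq_eval (α β : ℝ) (n : ℕ) (θ : ℝ) :
    pJacobiCos α β n θ = (jacobiPoly α β n).eval (Real.sin θ ^ 2) := by
  rw [jacobiPoly_eval, jacobiForm, Nat.sum_antidiagonal_eq_sum_range_succ_mk, pJacobiCos,
    ← Real.cos_sq']
  refine sum_congr rfl fun m hm => ?_
  have hmn : m ≤ n := Nat.lt_succ_iff.1 (mem_range.1 hm)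
  simp only [jacobiCoeff, Nat.add_sub_cancel' hmn, Nat.cast_sub hmn, smul_eq_mul]
  ring

lemma jacobiForm_mul_mul (α β : ℝ) (n : ℕ) (r c s : ℝ) :
    jacobiForm α β n (r * c) (r * s) = r ^ n * jacobiForm α β n c s := by
  simp only [jacobiForm, mul_sum, smul_eq_mul]
  refine sum_congr rfl fun p hp => ?_
  rw [← mem_antidiagonal.1 hp]
  ring

lemma jacobiCoeff_self_swap (β : ℝ) (m k : ℕ) :
    jacobiCoeff β β k m = (-1) ^ (m + k) * jacobiCoeff β β m k := by
  have hsign : (-1 : ℝ) ^ (m + k) * (-1) ^ k = (-1) ^ m := by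
    rw [pow_add, mul_assoc, ← mul_pow]
    simp
  rw [jacobiCoeff, jacobiCoeff, ← hsign, Nat.add_comm k m, Nat.choose_symm_add]
  ring

lemma jacobiForm_self_swap (β : ℝ) (n : ℕ) (c s : ℝ) :
    jacobiForm β β n s c = (-1) ^ n * jacobiForm β β n c s := by
  rw [jacobiForm, ← Nat.sum_antidiagonal_swap, jacobiForm, mul_sum]
  refine sum_congr rfl fun p hp => ?_
  simp only [Prod.fst_swap, Prod.snd_swap, smul_eq_mul]
  rw [jacobiCoeff_self_swap, mem_antidiagonal.1 hp]
  ring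

lemma jacobiForm_zero_one (α β : ℝ) (n : ℕ) :
    jacobiForm α β n (0 : ℝ) 1 = jacobiCoeff α β 0 n := by
  rw [jacobiForm, sum_eq_single_of_mem (0, n) (by simp)]
  · simp
  · intro p hp hne
    have hp0 : p.1 ≠ 0 := fun h => hne <| by
      ext <;> have := mem_antidiagonal.1 hp <;> simp_all
    simp [hp0]

lemma abs_jacobiForm_zero_one {α β : ℝ} (hα : -1 < α) (hβ : -1 < β) (n : ℕ) :
    |jacobiForm α β n (0 : ℝ) 1| =
      Real.Gamma (β + n + 1) * Real.Gamma (α + 1) /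
        (Real.Gamma (β + 1) * Real.Gamma (α + n + 1)) := by
  have hβn : 0 < Real.Gamma (β + n + 1) := Real.Gamma_pos_of_pos (by linarith)
  have hβ1 : 0 < Real.Gamma (β + 1) := Real.Gamma_pos_of_pos (by linarith)
  have hαn : 0 < Real.Gamma (α + n + 1) := Real.Gamma_pos_of_pos (by linarith)
  have hα1 : 0 < Real.Gamma (α + 1) := Real.Gamma_pos_of_pos (by linarith)
  simp [jacobiForm_zero_one, jacobiCoeff, abs_mul, abs_of_pos, hβn, hβ1, hαn, hα1,
    div_mul_div_comm]

/-! ### The differential equation -/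

lemma jacobiCoeff_succ_right {α β : ℝ} (hα : -1 < α) (hβ : -1 < β) (m k : ℕ) :
    (k + 1) * (k + 1 + α) * jacobiCoeff α β m (k + 1) =
      -((m + 1) * (m + 1 + β) * jacobiCoeff α β (m + 1) k) := by
  have hβm : β + m + 1 ≠ 0 := by linarith
  have hαk : α + k + 1 ≠ 0 := by linarith
  have hΓβ : Real.Gamma (β + m + 1) ≠ 0 := (Real.Gamma_pos_of_pos (by linarith)).ne'
  have hΓα : Real.Gamma (α + k + 1) ≠ 0 := (Real.Gamma_pos_of_pos (by linarith)).ne'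
  have hΓβ_succ : Real.Gamma (β + (m + 1 : ℕ) + 1) = (β + m + 1) * Real.Gamma (β + m + 1) := by
    rw [← Real.Gamma_add_one hβm]
    push_cast
    ring_nf
  have hΓα_succ : Real.Gamma (α + (k + 1 : ℕ) + 1) = (α + k + 1) * Real.Gamma (α + k + 1) := by
    rw [← Real.Gamma_add_one hαk]
    push_cast
    ring_nf
  have hchoose : ((m + (k + 1)).choose m : ℝ) * (k + 1) =
      ((m + (k + 1)).choose (m + 1) : ℝ) * (m + 1) := by
    have h := Nat.choose_succ_right_eq (m + (k + 1)) m
    rw [Nat.add_sub_cancel_left] at h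
    exact_mod_cast h.symm
  rw [jacobiCoeff, jacobiCoeff, hΓβ_succ, hΓα_succ, show m + 1 + k = m + (k + 1) by omega]
  field_simp
  linear_combination (-(-1) ^ k * Real.Gamma (β + (m + (k + 1) : ℕ) + 1) * Real.Gamma (α + 1) *
    (k + 1 + α) * (m + 1 + β)) * hchoose

/-- The Jacobi operator maps the Bernstein basis to a combination of two neighbours of one degree
less, so the equation for the form reduces to a recurrence for its coefficients. -/
lemma jacobi_operator_bernstein (α β : ℝ) (m k : ℕ) (x : ℝ) :
    x * (1 - x) * (derivative (derivative ((1 - X : ℝ[X]) ^ m * X ^ k))).eval x +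
      ((α + 1) - (α + β + 2) * x) * (derivative ((1 - X : ℝ[X]) ^ m * X ^ k)).eval x +
      ((m + k : ℕ) : ℝ) * ((m + k : ℕ) + α + β + 1) * ((1 - X : ℝ[X]) ^ m * X ^ k).eval x =
    k * (k + α) * ((1 - x) ^ m * x ^ (k - 1)) + m * (m + β) * ((1 - x) ^ (m - 1) * x ^ k) := by
  rcases k with _ | _ | k <;> rcases m with _ | _ | m <;>
    simp [derivative_mul, derivative_pow] <;> ring

lemma sum_jacobiCoeff_mul_bernstein_eq_zero {α β : ℝ} (hα : -1 < α) (hβ : -1 < β) (n : ℕ)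
    (x : ℝ) :
    ∑ p ∈ antidiagonal n, jacobiCoeff α β p.1 p.2 *
      (p.2 * (p.2 + α) * ((1 - x) ^ p.1 * x ^ (p.2 - 1)) +
        p.1 * (p.1 + β) * ((1 - x) ^ (p.1 - 1) * x ^ p.2)) = 0 := by
  cases n with
  | zero => simp
  | succ n =>
    simp only [mul_add (jacobiCoeff _ _ _ _), sum_add_distrib]
    rw [Nat.sum_antidiagonal_succ', Nat.sum_antidiagonal_succ]
    simp only [Nat.cast_zero, zero_mul, mul_zero, zero_add, ← sum_add_distrib,
      Nat.add_sub_cancel]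
    refine sum_eq_zero fun p _ => ?_
    push_cast
    linear_combination ((1 - x) ^ p.1 * x ^ p.2) * jacobiCoeff_succ_right hα hβ p.1 p.2

lemma jacobiPoly_ode {α β : ℝ} (hα : -1 < α) (hβ : -1 < β) (n : ℕ) (x : ℝ) :
    x * (1 - x) * (derivative (derivative (jacobiPoly α β n))).eval x +
      ((α + 1) - (α + β + 2) * x) * (derivative (jacobiPoly α β n)).eval x +
      n * (n + α + β + 1) * (jacobiPoly α β n).eval x = 0 := by
  rw [← sum_jacobiCoeff_mul_bernstein_eq_zero hα hβ n x]
  simp only [jacobiPoly, jacobiForm, derivative_sum, derivative_smul, eval_finsetSum, eval_smul,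
    smul_eq_mul, mul_sum, ← sum_add_distrib]
  refine sum_congr rfl fun p hp => ?_
  rw [← jacobi_operator_bernstein, mem_antidiagonal.1 hp]
  ring

/-! ### Sonin's method -/

section Sonin

variable {s : Set ℝ} {y y' y'' p p' q q' r : ℝ → ℝ}

lemma monotoneOn_sonin (hs : Convex ℝ s)
    (hy : ∀ x ∈ s, HasDerivAt y (y' x) x) (hy' : ∀ x ∈ s, HasDerivAt y' (y'' x) x)
    (hp : ∀ x ∈ s, HasDerivAt p (p' x) x) (hq : ∀ x ∈ s, HasDerivAt q (q' x) x)
    (hq0 : ∀ x ∈ s, q x ≠ 0)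
    (ode : ∀ x ∈ s, p x * y'' x + r x * y' x + q x * y x = 0)
    (hr : ∀ x ∈ s, 2 * r x * q x ≤ p' x * q x - p x * q' x) :
    MonotoneOn (fun x => y x ^ 2 + p x / q x * y' x ^ 2) s := by
  have hderiv : ∀ x ∈ s, HasDerivAt (fun x => y x ^ 2 + p x / q x * y' x ^ 2)
      ((p' x * q x - p x * q' x - 2 * r x * q x) * (y' x / q x) ^ 2) x := by
    intro x hx
    have hqx := hq0 x hx
    refine (((hy x hx).pow 2).add
      (((hp x hx).div (hq x hx) hqx).mul ((hy' x hx).pow 2))).congr_deriv ?_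
    simp only [Pi.pow_apply, Pi.div_apply]
    field_simp
    linear_combination (2 * y' x * q x) * ode x hx
  refine monotoneOn_of_hasDerivWithinAt_nonneg hs
    (fun x hx => (hderiv x hx).continuousAt.continuousWithinAt)
    (fun x hx => (hderiv x (interior_subset hx)).hasDerivWithinAt) fun x hx => ?_
  exact mul_nonneg (sub_nonneg.2 (hr x (interior_subset hx))) (sq_nonneg _)

/-- The Sonin function `y² + (p / q) y'²` dominates `y²` and agrees with it where `p` vanishes. -/
lemma abs_le_abs_of_sonin {a b : ℝ} (hs : Convex ℝ s) (ha : a ∈ s) (hb : b ∈ s) (hab : a ≤ b)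
    (hy : ∀ x ∈ s, HasDerivAt y (y' x) x) (hy' : ∀ x ∈ s, HasDerivAt y' (y'' x) x)
    (hp : ∀ x ∈ s, HasDerivAt p (p' x) x) (hq : ∀ x ∈ s, HasDerivAt q (q' x) x)
    (hpa : 0 ≤ p a) (hpb : p b = 0) (hq0 : ∀ x ∈ s, 0 < q x)
    (ode : ∀ x ∈ s, p x * y'' x + r x * y' x + q x * y x = 0)
    (hr : ∀ x ∈ s, 2 * r x * q x ≤ p' x * q x - p x * q' x) :
    |y a| ≤ |y b| := by
  have hmono := monotoneOn_sonin hs hy hy' hp hq (fun x hx => (hq0 x hx).ne') ode hr ha hb hab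
  have hnonneg : 0 ≤ p a / q a * y' a ^ 2 :=
    mul_nonneg (div_nonneg hpa (hq0 a ha).le) (sq_nonneg _)
  simp only [hpb, zero_div, zero_mul, add_zero] at hmono
  exact sq_le_sq.1 (by linarith)

end Sonin

lemma hasDerivAt_mul_one_sub (x : ℝ) : HasDerivAt (fun x => x * (1 - x)) (1 - 2 * x) x :=
  ((hasDerivAt_id' x).mul ((hasDerivAt_id' x).const_sub 1)).congr_deriv (by ring)

lemma abs_jacobiPoly_self_eval_le_eval_one {β x : ℝ} {n : ℕ} (hβ : -(1 / 2) ≤ β) (hn : 1 ≤ n)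
    (hx : 1 / 2 ≤ x) (hx1 : x ≤ 1) :
    |(jacobiPoly β β n).eval x| ≤ |(jacobiPoly β β n).eval 1| := by
  have hn1 : (1 : ℝ) ≤ n := by exact_mod_cast hn
  refine abs_le_abs_of_sonin (convex_Icc (1 / 2 : ℝ) 1) ⟨hx, hx1⟩ ⟨by norm_num, le_rfl⟩ hx1
    (r := fun x => (β + 1) * (1 - 2 * x)) (q := fun _ => n * (n + β + β + 1))
    (fun x _ => (jacobiPoly β β n).hasDerivAt x)
    (fun x _ => (derivative (jacobiPoly β β n)).hasDerivAt x)
    (fun x _ => hasDerivAt_mul_one_sub x) (fun x _ => hasDerivAt_const x _)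
    (mul_nonneg (by linarith) (by linarith)) (by simp)
    (fun _ _ => mul_pos (by linarith) (by linarith)) (fun x _ => ?_) fun x hx => ?_
  · linear_combination jacobiPoly_ode (α := β) (β := β) (by linarith) (by linarith) n x
  · have h : 0 ≤ (2 * β + 1) * (2 * x - 1) * (n * (n + β + β + 1)) :=
      mul_nonneg (mul_nonneg (by linarith) (by linarith [hx.1]))
        (mul_nonneg (by linarith) (by linarith))
    linarith

lemma abs_jacobiForm_self_le_one {β x : ℝ} {n : ℕ} (hβ : -(1 / 2) ≤ β) (hn : 1 ≤ n)
    (hx0 : 0 ≤ x) (hx1 : x ≤ 1) :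
    |jacobiForm β β n (1 - x) x| ≤ 1 := by
  wlog hx : 1 / 2 ≤ x generalizing x
  · have hswap := this (x := 1 - x) (by linarith) (by linarith) (by linarith)
    rw [sub_sub_cancel, jacobiForm_self_swap, abs_mul, abs_pow, abs_neg, abs_one, one_pow,
      one_mul] at hswap
    exact hswap
  have hone : |jacobiForm β β n (0 : ℝ) 1| = 1 := by
    have hΓ : 0 < Real.Gamma (β + 1) := Real.Gamma_pos_of_pos (by linarith)
    have hΓn : 0 < Real.Gamma (β + n + 1) := Real.Gamma_pos_of_pos (by linarith)
    rw [abs_jacobiForm_zero_one (by linarith) (by linarith)]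
    field_simp
  have h := abs_jacobiPoly_self_eval_le_eval_one hβ hn hx hx1
  rwa [jacobiPoly_eval, jacobiPoly_eval, sub_self, hone] at h

lemma abs_jacobiForm_self_le_pow {β c s : ℝ} {n : ℕ} (hβ : -(1 / 2) ≤ β) (hn : 1 ≤ n)
    (hc : 0 ≤ c) (hs : 0 ≤ s) (hcs : 0 < c + s) :
    |jacobiForm β β n c s| ≤ (c + s) ^ n := by
  have hhom : jacobiForm β β n c s =
      (c + s) ^ n * jacobiForm β β n (1 - s / (c + s)) (s / (c + s)) := by
    rw [← jacobiForm_mul_mul, mul_sub, mul_div_cancel₀ _ hcs.ne', mul_one, add_sub_cancel_right]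
  rw [hhom, abs_mul, abs_of_pos (pow_pos hcs n)]
  exact mul_le_of_le_one_right (pow_pos hcs n).le <| abs_jacobiForm_self_le_one hβ hn
    (div_nonneg hs hcs.le) ((div_le_one hcs).2 (by linarith))

/-! ### Sonin's method for `x ^ (α - β) * p_n^{(α,β)}` -/

lemma hasDerivAt_rpow_mul {f : ℝ → ℝ} {f' x : ℝ} (l : ℝ) (hx : 0 < x) (hf : HasDerivAt f f' x) :
    HasDerivAt (fun x => x ^ l * f x) (x ^ (l - 1) * (l * f x + x * f')) x := by
  refine ((Real.hasDerivAt_rpow_const (Or.inl hx.ne')).mul hf).congr_deriv ?_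
  rw [Real.rpow_sub_one hx.ne']
  field_simp

/-- `x ^ 2` times the Jacobi equation, rewritten for `y = x ^ l * P x`; the derivatives of `y`
appear in the shape that `hasDerivAt_rpow_mul` produces. -/
lemma rpow_mul_eval_ode {β K x : ℝ} (l : ℝ) {P : ℝ[X]} (hx : 0 < x)
    (ode : x * (1 - x) * (derivative (derivative P)).eval x +
      ((β + l + 1) - (β + l + β + 2) * x) * (derivative P).eval x + K * P.eval x = 0) :
    x ^ 2 * (1 - x) * (x ^ (l - 1 - 1) * ((l - 1) * (l * P.eval x + x * (derivative P).eval x) +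
        x * (l * (derivative P).eval x +
          ((derivative P).eval x + x * (derivative (derivative P)).eval x)))) +
      x * ((β + 1 - l) - (2 * β + 2 - l) * x) *
        (x ^ (l - 1) * (l * P.eval x + x * (derivative P).eval x)) +
      ((K + l * (2 * β + 1)) * x - l * β) * (x ^ l * P.eval x) = 0 := by
  have h1 : x ^ (l - 1) = x ^ (l - 1 - 1) * x := by
    rw [Real.rpow_sub_one hx.ne' (l - 1), div_mul_cancel₀ _ hx.ne']
  have h0 : x ^ l = x ^ (l - 1 - 1) * x ^ 2 := by
    rw [sq, ← mul_assoc, ← h1, Real.rpow_sub_one hx.ne' l, div_mul_cancel₀ _ hx.ne']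
  rw [h0, h1]
  linear_combination (x ^ (l - 1 - 1) * x ^ 3) * ode

lemma rpow_mul_sonin_condition {β l A x : ℝ} (hβ : -(1 / 2) ≤ β) (hβ0 : β ≤ 0)
    (hl : β + 1 / 2 ≤ l) (hA : 0 ≤ A) (hx : 0 ≤ x) (hx1 : x ≤ 1) :
    2 * (x * ((β + 1 - l) - (2 * β + 2 - l) * x)) * (A * x - l * β) ≤
      (2 * x - 3 * x ^ 2) * (A * x - l * β) - x ^ 2 * (1 - x) * A := by
  have h1x : 0 ≤ 1 - x := by linarith
  have hl0 : 0 ≤ l := by linarith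
  have hlβ : 0 ≤ l * -β := mul_nonneg hl0 (by linarith)
  have hA_coeff : 0 ≤ (2 * l - 2 * β - 1) * (1 - x) + (2 * β + 1) * x :=
    add_nonneg (mul_nonneg (by linarith) h1x) (mul_nonneg (by linarith) hx)
  have hlβ_coeff : 0 ≤ (2 * l - 2 * β) * (1 - x) + (2 * β + 1) * x :=
    add_nonneg (mul_nonneg (by linarith) h1x) (mul_nonneg (by linarith) hx)
  have h := add_nonneg (mul_nonneg (mul_nonneg hA (sq_nonneg x)) hA_coeff)
    (mul_nonneg (mul_nonneg hlβ hx) hlβ_coeff)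
  linear_combination h

lemma rpow_mul_abs_jacobiPoly_eval_le_of_nonpos {α β x : ℝ} {n : ℕ} (hβ : -(1 / 2) ≤ β)
    (hβ0 : β ≤ 0) (hα : 2 * β + 1 / 2 ≤ α) (hn : 1 ≤ n) (hx : 0 < x) (hx1 : x ≤ 1) :
    x ^ (α - β) * |(jacobiPoly α β n).eval x| ≤ |(jacobiPoly α β n).eval 1| := by
  obtain ⟨l, rfl⟩ : ∃ l, α = β + l := ⟨α - β, by ring⟩
  rw [add_sub_cancel_left]
  have hn1 : (1 : ℝ) ≤ n := by exact_mod_cast hn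
  have hl : β + 1 / 2 ≤ l := by linarith
  have hl0 : 0 ≤ l := by linarith
  set P := jacobiPoly (β + l) β n
  set A : ℝ := n * (n + (β + l) + β + 1) + l * (2 * β + 1) with hA
  have hA0 : 0 < A := add_pos_of_pos_of_nonneg (mul_pos (by linarith) (by linarith))
    (mul_nonneg hl0 (by linarith))
  have hbound : |x ^ l * P.eval x| ≤ |(1 : ℝ) ^ l * P.eval 1| := by
    refine abs_le_abs_of_sonin (convex_Ioc (0 : ℝ) 1) ⟨hx, hx1⟩ ⟨one_pos, le_rfl⟩ hx1
      (p := fun x => x ^ 2 * (1 - x)) (p' := fun x => 2 * x - 3 * x ^ 2)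
      (q := fun x => A * x - l * β) (q' := fun _ => A)
      (r := fun x => x * ((β + 1 - l) - (2 * β + 2 - l) * x))
      (fun x hx => hasDerivAt_rpow_mul l hx.1 (P.hasDerivAt x))
      (fun x hx => hasDerivAt_rpow_mul (l - 1) hx.1 (((P.hasDerivAt x).const_mul l).add
        ((hasDerivAt_id' x).mul ((derivative P).hasDerivAt x))))
      (fun x _ => ?_) (fun x _ => ?_) (mul_nonneg (sq_nonneg x) (by linarith)) (by simp)
      (fun x hx => ?_) (fun x hx => ?_)
      (fun x hx => rpow_mul_sonin_condition hβ hβ0 hl hA0.le hx.1.le hx.2)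
    · exact ((hasDerivAt_pow 2 x).mul ((hasDerivAt_id' x).const_sub 1)).congr_deriv
        (by push_cast; ring)
    · exact (((hasDerivAt_id' x).const_mul A).sub_const _).congr_deriv (mul_one A)
    · have h : 0 ≤ l * -β := mul_nonneg hl0 (by linarith)
      linarith [mul_pos hA0 hx.1]
    · have h := rpow_mul_eval_ode l hx.1 (jacobiPoly_ode (α := β + l) (β := β) (n := n)
        (by linarith) (by linarith) x)
      simpa [hA] using h
  rwa [abs_mul, abs_of_pos (Real.rpow_pos_of_pos hx l), Real.one_rpow, one_mul] at hbound

/-! ### Bateman's fractional integral -/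

section Beta

variable {u v : ℝ}

lemma ofReal_rpow_mul_one_sub_rpow {t : ℝ} (ht : t ∈ Set.Icc (0 : ℝ) 1) :
    ((t ^ (u - 1) * (1 - t) ^ (v - 1) : ℝ) : ℂ) =
      (t : ℂ) ^ ((u : ℂ) - 1) * (1 - (t : ℂ)) ^ ((v : ℂ) - 1) := by
  rw [Complex.ofReal_mul, Complex.ofReal_cpow ht.1, Complex.ofReal_cpow (sub_nonneg.2 ht.2)]
  push_cast
  rfl

lemma intervalIntegrable_rpow_mul_one_sub_rpow (hu : 0 < u) (hv : 0 < v) :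
    IntervalIntegrable (fun t : ℝ => t ^ (u - 1) * (1 - t) ^ (v - 1)) volume 0 1 := by
  have h := Complex.betaIntegral_convergent (u := u) (v := v) (by simpa) (by simpa)
  rw [intervalIntegrable_iff_integrableOn_Ioc_of_le zero_le_one] at h ⊢
  refine IntegrableOn.congr_fun h.re (fun t ht => ?_) measurableSet_Ioc
  rw [← ofReal_rpow_mul_one_sub_rpow ⟨ht.1.le, ht.2⟩, RCLike.re_to_complex, Complex.ofReal_re]

lemma integral_rpow_mul_one_sub_rpow (hu : 0 < u) (hv : 0 < v) :
    ∫ t in (0 : ℝ)..1, t ^ (u - 1) * (1 - t) ^ (v - 1) = beta u v := by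
  rw [beta_eq_betaIntegralReal u v hu hv, Complex.betaIntegral,
    ← intervalIntegral.integral_congr fun t ht =>
      ofReal_rpow_mul_one_sub_rpow (Set.uIcc_of_le (zero_le_one' ℝ) ▸ ht),
    intervalIntegral.integral_ofReal, Complex.ofReal_re]

end Beta

lemma jacobiCoeff_mul_beta {a γ : ℝ} (ha : 0 < a) (hγ : -1 < γ) (β : ℝ) (m k : ℕ) :
    jacobiCoeff γ β m k * beta a (γ + k + 1) =
      beta a (γ + 1) * jacobiCoeff (γ + a) β m k := by
  have hΓγ : Real.Gamma (γ + k + 1) ≠ 0 := (Real.Gamma_pos_of_pos (by linarith)).ne'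
  have hΓa : Real.Gamma (γ + a + 1) ≠ 0 := (Real.Gamma_pos_of_pos (by linarith)).ne'
  rw [jacobiCoeff, jacobiCoeff, beta, beta, show a + (γ + k + 1) = γ + a + k + 1 by ring,
    show a + (γ + 1) = γ + a + 1 by ring]
  field_simp

lemma integral_mul_jacobiForm {a γ : ℝ} (ha : 0 < a) (hγ : -1 < γ) (β : ℝ) (n : ℕ) (c s : ℝ) :
    ∫ t in (0 : ℝ)..1, t ^ (a - 1) * (1 - t) ^ γ * jacobiForm γ β n c ((1 - t) * s) =
      beta a (γ + 1) * jacobiForm (γ + a) β n c s := by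
  have hpos (k : ℕ) : 0 < γ + k + 1 := by linarith [(k.cast_nonneg : (0 : ℝ) ≤ k)]
  have hexpand : ∫ t in (0 : ℝ)..1, t ^ (a - 1) * (1 - t) ^ γ * jacobiForm γ β n c ((1 - t) * s) =
      ∫ t in (0 : ℝ)..1, ∑ p ∈ antidiagonal n, jacobiCoeff γ β p.1 p.2 * (c ^ p.1 * s ^ p.2) *
        (t ^ (a - 1) * (1 - t) ^ (γ + p.2 + 1 - 1)) := by
    refine intervalIntegral.integral_congr_Ioo_of_le zero_le_one fun t ht => ?_
    simp only [jacobiForm, mul_sum, smul_eq_mul]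
    refine sum_congr rfl fun p _ => ?_
    rw [add_sub_cancel_right, Real.rpow_add (sub_pos.2 ht.2), Real.rpow_natCast, mul_pow]
    ring
  rw [hexpand, intervalIntegral.integral_finsetSum fun p _ =>
    (intervalIntegrable_rpow_mul_one_sub_rpow ha (hpos p.2)).const_mul _, jacobiForm, mul_sum]
  refine sum_congr rfl fun p _ => ?_
  rw [intervalIntegral.integral_const_mul, integral_rpow_mul_one_sub_rpow ha (hpos p.2),
    mul_right_comm, jacobiCoeff_mul_beta ha hγ, smul_eq_mul, mul_assoc]

lemma rpow_mul_integral_le_beta {a b x : ℝ} (ha : 0 < a) (hb : 0 < b) (hx : 0 < x) (hx1 : x ≤ 1) :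
    x ^ a * ∫ t in (0 : ℝ)..1, t ^ (a - 1) * (1 - x * t) ^ (b - 1) ≤ beta a b := by
  have hscale : x ^ a * ∫ t in (0 : ℝ)..1, t ^ (a - 1) * (1 - x * t) ^ (b - 1) =
      ∫ t in (0 : ℝ)..x, t ^ (a - 1) * (1 - t) ^ (b - 1) := by
    have hsubst := intervalIntegral.mul_integral_comp_mul_left (a := 0) (b := 1)
      (f := fun t : ℝ => t ^ (a - 1) * (1 - t) ^ (b - 1)) x
    rw [mul_zero, mul_one] at hsubst
    rw [← hsubst, ← intervalIntegral.integral_const_mul, ← intervalIntegral.integral_const_mul]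
    refine intervalIntegral.integral_congr_Ioo_of_le zero_le_one fun t ht => ?_
    rw [Real.mul_rpow hx.le ht.1.le, Real.rpow_sub_one hx.ne' a]
    field_simp
  rw [hscale, ← integral_rpow_mul_one_sub_rpow ha hb]
  refine intervalIntegral.integral_mono_interval le_rfl hx.le hx1 ?_
    (intervalIntegrable_rpow_mul_one_sub_rpow ha hb)
  filter_upwards [ae_restrict_mem measurableSet_Ioc] with t ht
  exact mul_nonneg (Real.rpow_nonneg ht.1.le _) (Real.rpow_nonneg (sub_nonneg.2 ht.2) _)

lemma beta_mul_abs_jacobiPoly_eval_le {a β x : ℝ} {n : ℕ} (ha : 0 < a) (hβ : 0 ≤ β) (hn : 1 ≤ n)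
    (hx : 0 < x) (hx1 : x ≤ 1) :
    beta a (β + 1) * |(jacobiPoly (β + a) β n).eval x| ≤
      ∫ t in (0 : ℝ)..1, t ^ (a - 1) * (1 - x * t) ^ (β + n) := by
  have hbeta : 0 < beta a (β + 1) := beta_pos ha (by linarith)
  rw [jacobiPoly_eval, ← abs_of_pos hbeta, ← abs_mul,
    ← integral_mul_jacobiForm ha (by linarith), ← Real.norm_eq_abs]
  refine intervalIntegral.norm_integral_le_of_norm_le zero_le_one ?_ ?_
  · have hne : ∀ᵐ t : ℝ, t ≠ 1 := Measure.ae_ne volume 1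
    filter_upwards [hne] with t ht1 ht
    have ht0 : 0 ≤ t := ht.1.le
    have h1t : 0 < 1 - t := sub_pos.2 (lt_of_le_of_ne ht.2 ht1)
    have hle : 1 - t ≤ 1 - x * t := by nlinarith
    have hpow : 0 ≤ (1 - x * t) ^ β := Real.rpow_nonneg (h1t.le.trans hle) β
    have hsum : 1 - x + (1 - t) * x = 1 - x * t := by ring
    have hform : |jacobiForm β β n (1 - x) ((1 - t) * x)| ≤ (1 - x * t) ^ n := by
      rw [← hsum]
      exact abs_jacobiForm_self_le_pow (by linarith) hn (by linarith) (by positivity)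
        (by linarith)
    rw [Real.rpow_add (h1t.trans_le hle), Real.rpow_natCast, Real.norm_eq_abs, abs_mul,
      abs_of_nonneg (by positivity), mul_assoc]
    gcongr
  · refine (intervalIntegral.intervalIntegrable_rpow' (by linarith)).mul_continuousOn ?_
    exact (Continuous.rpow_const (by fun_prop) fun t => Or.inr (by positivity)).continuousOn

lemma rpow_mul_abs_jacobiPoly_eval_le_of_nonneg {α β x : ℝ} {n : ℕ} (hβ : 0 ≤ β) (hαβ : β < α)
    (hn : 1 ≤ n) (hx : 0 < x) (hx1 : x ≤ 1) :
    x ^ (α - β) * |(jacobiPoly α β n).eval x| ≤ |(jacobiPoly α β n).eval 1| := by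
  obtain ⟨a, ha, rfl⟩ : ∃ a, 0 < a ∧ α = β + a := ⟨α - β, sub_pos.2 hαβ, by ring⟩
  have hbeta : 0 < beta a (β + 1) := beta_pos ha (by linarith)
  have hone : beta a (β + 1) * |(jacobiPoly (β + a) β n).eval 1| = beta a (β + n + 1) := by
    have hΓ : Real.Gamma (β + 1) ≠ 0 := (Real.Gamma_pos_of_pos (by linarith)).ne'
    have hΓa : Real.Gamma (β + a + 1) ≠ 0 := (Real.Gamma_pos_of_pos (by linarith)).ne'
    rw [jacobiPoly_eval, sub_self, abs_jacobiForm_zero_one (by linarith) (by linarith), beta, beta,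
      show a + (β + 1) = β + a + 1 by ring, show a + (β + n + 1) = β + a + n + 1 by ring]
    field_simp
  rw [add_sub_cancel_left]
  refine le_of_mul_le_mul_left ?_ hbeta
  calc beta a (β + 1) * (x ^ a * |(jacobiPoly (β + a) β n).eval x|)
      = x ^ a * (beta a (β + 1) * |(jacobiPoly (β + a) β n).eval x|) := by ring
    _ ≤ x ^ a * ∫ t in (0 : ℝ)..1, t ^ (a - 1) * (1 - x * t) ^ (β + n) := by
      gcongr
      exact beta_mul_abs_jacobiPoly_eval_le ha hβ hn hx hx1
    _ ≤ beta a (β + n + 1) := by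
      have h := rpow_mul_integral_le_beta (b := β + n + 1) ha (by linarith) hx hx1
      rwa [add_sub_cancel_right] at h
    _ = beta a (β + 1) * |(jacobiPoly (β + a) β n).eval 1| := hone.symm

/-! ### A lower bound for quotients of Gamma values -/

lemma gamma_add_one_mul_rpow_le {x l : ℝ} (hx : 0 < x) (hl : 0 ≤ l) :
    Real.Gamma (x + 1) * x ^ l ≤ Real.Gamma (x + 1 + l) := by
  obtain rfl | hl := hl.eq_or_lt
  · simp
  have hΓ : 0 < Real.Gamma x := Real.Gamma_pos_of_pos hx
  have hΓ1 : 0 < Real.Gamma (x + 1) := Real.Gamma_pos_of_pos (by linarith)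
  have hΓl : 0 < Real.Gamma (x + 1 + l) := Real.Gamma_pos_of_pos (by linarith)
  have hslope := Real.convexOn_log_Gamma.slope_mono_adjacent (x := x) (y := x + 1)
    (z := x + 1 + l) hx (by simp only [Set.mem_Ioi]; linarith) (by linarith) (by linarith)
  have hlog : Real.log (Real.Gamma (x + 1)) = Real.log x + Real.log (Real.Gamma x) := by
    rw [Real.Gamma_add_one hx.ne', Real.log_mul hx.ne' hΓ.ne']
  simp only [Function.comp, add_sub_cancel_left, div_one] at hslope
  rw [le_div_iff₀ hl] at hslope
  rw [← Real.log_le_log_iff (by positivity) hΓl, Real.log_mul hΓ1.ne' (by positivity),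
    Real.log_rpow hx]
  linear_combination hslope - l * hlog

lemma one_add_div_le_rpow {x l : ℝ} (hx : 0 < x) (hl : 0 ≤ l) :
    1 + l / (x + 1 / 2) ≤ ((x + 1) / x) ^ l := by
  have hquot : (x + 1) / x = 1 + 1 / x := by field_simp
  have hlog : 1 / (x + 1 / 2) ≤ Real.log (1 + 1 / x) := by
    refine le_of_eq_of_le ?_ (Real.le_log_one_add_of_nonneg (x := 1 / x) (by positivity))
    field_simp
    ring
  rw [hquot, Real.rpow_def_of_pos (by positivity)]
  calc 1 + l / (x + 1 / 2) = 1 / (x + 1 / 2) * l + 1 := by ring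
    _ ≤ Real.log (1 + 1 / x) * l + 1 := by gcongr
    _ ≤ Real.exp (Real.log (1 + 1 / x) * l) := Real.add_one_le_exp _

/-- The quotient comparing `Γ (x + 1 / 2 + l) / Γ (x + 1 / 2)` with its asymptotic size `x ^ l`.
With the shift by `1 / 2` it decreases to its limit `1` along integer steps for every `l ≥ 0`. -/
noncomputable def gammaQuotient (l x : ℝ) : ℝ :=
  Real.Gamma (x + 1 / 2 + l) / (Real.Gamma (x + 1 / 2) * x ^ l)

lemma gammaQuotient_add_one_le {x l : ℝ} (hx : 0 < x) (hl : 0 ≤ l) :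
    gammaQuotient l (x + 1) ≤ gammaQuotient l x := by
  have hpow : (x + 1) ^ l = ((x + 1) / x) ^ l * x ^ l := by
    rw [← Real.mul_rpow (by positivity) hx.le, div_mul_cancel₀ _ hx.ne']
  have hfactor : gammaQuotient l (x + 1) =
      (1 + l / (x + 1 / 2)) / ((x + 1) / x) ^ l * gammaQuotient l x := by
    rw [gammaQuotient, gammaQuotient, add_right_comm x 1, add_right_comm (x + 1 / 2) 1,
      Real.Gamma_add_one (by linarith), Real.Gamma_add_one (by linarith), hpow]
    field_simp
  rw [hfactor]
  refine mul_le_of_le_one_left (by rw [gammaQuotient]; positivity) ?_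
  exact (div_le_one (by positivity)).2 (one_add_div_le_rpow hx hl)

lemma rpow_le_gammaQuotient {x l : ℝ} (hx : 1 / 2 < x) (hl : 0 ≤ l) :
    (1 - 1 / 2 / x) ^ l ≤ gammaQuotient l x := by
  have hx0 : 0 < x := by linarith
  have h := gamma_add_one_mul_rpow_le (sub_pos.2 hx) hl
  rw [show x - 1 / 2 + 1 = x + 1 / 2 by ring] at h
  rw [gammaQuotient, le_div_iff₀ (by positivity), mul_left_comm,
    ← Real.mul_rpow (sub_nonneg.2 ((div_le_one hx0).2 hx.le)) hx0.le, sub_mul, one_mul,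
    div_mul_cancel₀ _ hx0.ne']
  exact h

lemma one_le_gammaQuotient {x l : ℝ} (hx : 0 < x) (hl : 0 ≤ l) : 1 ≤ gammaQuotient l x := by
  have hanti : Antitone fun N : ℕ => gammaQuotient l (x + N) := by
    refine antitone_nat_of_succ_le fun N => ?_
    rw [Nat.cast_succ, ← add_assoc]
    exact gammaQuotient_add_one_le (by positivity) hl
  have hlim : Tendsto (fun N : ℕ => (1 - 1 / 2 / (x + N)) ^ l) atTop (𝓝 1) := by
    have hbase : Tendsto (fun N : ℕ => 1 - 1 / 2 / (x + N)) atTop (𝓝 (1 - 0)) :=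
      ((tendsto_atTop_add_const_left _ _ tendsto_natCast_atTop_atTop).const_div_atTop _).const_sub 1
    simpa using hbase.rpow_const (p := l) (Or.inr hl)
  refine le_of_tendsto hlim ?_
  filter_upwards [eventually_ge_atTop 1] with N hN
  have hN1 : (1 : ℝ) ≤ N := by exact_mod_cast hN
  calc (1 - 1 / 2 / (x + N)) ^ l ≤ gammaQuotient l (x + N) :=
        rpow_le_gammaQuotient (by linarith) hl
    _ ≤ gammaQuotient l x := by simpa using hanti N.zero_le

lemma gamma_add_half_mul_rpow_le {x l : ℝ} (hx : 0 < x) (hl : 0 ≤ l) :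
    Real.Gamma (x + 1 / 2) * x ^ l ≤ Real.Gamma (x + 1 / 2 + l) := by
  have h := one_le_gammaQuotient hx hl
  rwa [gammaQuotient, one_le_div (by positivity)] at h

/-! ### Uniform bound for Jacobi polynomials -/

lemma rpow_mul_abs_jacobiPoly_eval_one_le {α β : ℝ} {n : ℕ} (hβ : -(1 / 2) ≤ β) (hαβ : β ≤ α)
    (hn : 1 ≤ n) :
    (n : ℝ) ^ (α - β) * |(jacobiPoly α β n).eval 1| ≤
      Real.Gamma (α + 1) / Real.Gamma (β + 1) := by
  have hn1 : (1 : ℝ) ≤ n := by exact_mod_cast hn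
  have hl : 0 ≤ α - β := sub_nonneg.2 hαβ
  have hΓβ : 0 < Real.Gamma (β + 1) := Real.Gamma_pos_of_pos (by linarith)
  have hΓα : 0 < Real.Gamma (α + 1) := Real.Gamma_pos_of_pos (by linarith)
  have hΓβn : 0 < Real.Gamma (β + n + 1) := Real.Gamma_pos_of_pos (by linarith)
  have hΓαn : 0 < Real.Gamma (α + n + 1) := Real.Gamma_pos_of_pos (by linarith)
  have hΓ : Real.Gamma (β + n + 1) * (n : ℝ) ^ (α - β) ≤ Real.Gamma (α + n + 1) := by
    have hx : β + n + 1 / 2 + 1 / 2 = β + n + 1 := by ring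
    have hxl : β + n + 1 + (α - β) = α + n + 1 := by ring
    have h := gamma_add_half_mul_rpow_le (x := β + n + 1 / 2) (by linarith) hl
    rw [hx, hxl] at h
    refine le_trans ?_ h
    gcongr
    linarith
  rw [jacobiPoly_eval, sub_self, abs_jacobiForm_zero_one (by linarith) (by linarith)]
  calc (n : ℝ) ^ (α - β) * (Real.Gamma (β + n + 1) * Real.Gamma (α + 1) /
        (Real.Gamma (β + 1) * Real.Gamma (α + n + 1)))
      = Real.Gamma (β + n + 1) * (n : ℝ) ^ (α - β) / Real.Gamma (α + n + 1) *
          (Real.Gamma (α + 1) / Real.Gamma (β + 1)) := by field_simp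
    _ ≤ Real.Gamma (α + 1) / Real.Gamma (β + 1) :=
      mul_le_of_le_one_left (by positivity) ((div_le_one hΓαn).2 hΓ)

lemma abs_jacobiPoly_eval_le {α β x : ℝ} {n : ℕ}
    (hβ : 0 ≤ β ∨ -(1 / 2) ≤ β ∧ 2 * β + 1 / 2 ≤ α) (hαβ : β < α) (hn : 1 ≤ n)
    (hx : 0 < x) (hx1 : x ≤ 1) :
    |(jacobiPoly α β n).eval x| ≤
      Real.Gamma (α + 1) / (Real.Gamma (β + 1) * ((n : ℝ) * x) ^ (α - β)) := by
  have hn0 : (0 : ℝ) < n := by exact_mod_cast hn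
  have hβ' : -(1 / 2) ≤ β := by rcases hβ with h | h <;> linarith
  have hend : x ^ (α - β) * |(jacobiPoly α β n).eval x| ≤ |(jacobiPoly α β n).eval 1| := by
    rcases le_total 0 β with h0 | h0
    · exact rpow_mul_abs_jacobiPoly_eval_le_of_nonneg h0 hαβ hn hx hx1
    · obtain h | ⟨-, hα⟩ := hβ
      · exact rpow_mul_abs_jacobiPoly_eval_le_of_nonneg h hαβ hn hx hx1
      · exact rpow_mul_abs_jacobiPoly_eval_le_of_nonpos hβ' h0 hα hn hx hx1
  rw [← div_div, le_div_iff₀ (by positivity), Real.mul_rpow hn0.le hx.le]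
  calc |(jacobiPoly α β n).eval x| * ((n : ℝ) ^ (α - β) * x ^ (α - β))
      = (n : ℝ) ^ (α - β) * (x ^ (α - β) * |(jacobiPoly α β n).eval x|) := by ring
    _ ≤ (n : ℝ) ^ (α - β) * |(jacobiPoly α β n).eval 1| := by gcongr
    _ ≤ Real.Gamma (α + 1) / Real.Gamma (β + 1) :=
      rpow_mul_abs_jacobiPoly_eval_one_le hβ' hαβ.le hn

theorem jacobi_bound_one_general (α β : ℝ) (hβ : 0 ≤ β ∨ -(1 / 2) ≤ β ∧ 2 * β + 1 / 2 ≤ α)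
    (hαβ : β < α) (n : ℕ) (hn : 1 ≤ n) (θ₀ : ℝ) (hθ₀ : 0 < θ₀) :
    ∀ θ ∈ Set.Icc θ₀ (Real.pi / 2),
      |pJacobiCos α β n θ| ≤
        Real.Gamma (α + 1) /
          (Real.Gamma (β + 1) * ((n : ℝ) * Real.sin θ₀ ^ 2) ^ (α - β)) := by
  intro θ hθ
  have hβ' : -(1 / 2) ≤ β := by rcases hβ with h | h <;> linarith
  have hΓβ : 0 < Real.Gamma (β + 1) := Real.Gamma_pos_of_pos (by linarith)
  have hΓα : 0 < Real.Gamma (α + 1) := Real.Gamma_pos_of_pos (by linarith)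
  have hsin₀ : 0 < Real.sin θ₀ :=
    Real.sin_pos_of_pos_of_lt_pi hθ₀ (by linarith [hθ.1, hθ.2, Real.pi_pos])
  have hsin : Real.sin θ₀ ≤ Real.sin θ :=
    Real.sin_le_sin_of_le_of_le_pi_div_two (by linarith [Real.pi_pos]) hθ.2 hθ.1
  calc |pJacobiCos α β n θ|
      ≤ Real.Gamma (α + 1) / (Real.Gamma (β + 1) * ((n : ℝ) * Real.sin θ ^ 2) ^ (α - β)) := by
        rw [pJacobiCos_eq_eval]
        exact abs_jacobiPoly_eval_le hβ hαβ hn (pow_pos (hsin₀.trans_le hsin) 2)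
          (Real.sin_sq_le_one θ)
    _ ≤ Real.Gamma (α + 1) / (Real.Gamma (β + 1) * ((n : ℝ) * Real.sin θ₀ ^ 2) ^ (α - β)) := by
        gcongr

theorem jacobi_bound_one (α β : ℝ) (hβ : 0 ≤ β ∨ β = -(1/2)) (hαβ : β < α)
    (n : ℕ) (hn : 1 ≤ n) (θ₀ : ℝ) (hθ₀ : 0 < θ₀) (hθ₀' : θ₀ ≤ Real.pi / 2) :
    ∀ θ ∈ Set.Icc θ₀ (Real.pi / 2),
      |pJacobiCos α β n θ| ≤
        Real.Gamma (α + 1) /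
          (Real.Gamma (β + 1) * ((n : ℝ) * Real.sin θ₀ ^ 2) ^ (α - β)) := by
  exact jacobi_bound_one_general α β (hβ.imp_right fun h => ⟨h.ge, by linarith⟩) hαβ n hn θ₀ hθ₀
end

section
/- Let s > 0. There is no sequence (a_n)_{n≥0} of nonnegative real numbers such that for every θ ∈ (0, π/2] the series Σ_{n=0}^∞ a_n (cos θ)^{2n} converges with sum θ^{-s}. -/
/-!
A power series in `u` which converges at a single nonzero point is differentiable at `u = 0`. After
the substitution `u = cos² θ`, which vanishes to second order at `θ = π / 2`, its sum therefore has
left derivative `0` there, whereas the derivative of `θ ↦ θ ^ (-s)` is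
`-s * (π / 2) ^ (-s - 1) ≠ 0`.
-/

open Filter Set Topology FormalMultilinearSeries

section PowerSeries

variable {𝕜 : Type*} [NontriviallyNormedField 𝕜] {a : ℕ → 𝕜} {y : 𝕜}

theorem radius_ofScalars_pos_of_summable (hy : y ≠ 0) (ha : Summable fun n ↦ a n * y ^ n) :
    0 < (ofScalars 𝕜 a).radius := by
  have hle : (‖y‖₊ : ENNReal) ≤ (ofScalars 𝕜 a).radius := by
    refine le_radius_of_tendsto _ (l := 0) ?_
    simpa [ofScalars_norm] using ha.tendsto_atTop_zero.norm
  exact lt_of_lt_of_le (by simpa using hy) hle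

variable [CompleteSpace 𝕜]

theorem hasDerivAt_tsum_mul_pow_zero (hy : y ≠ 0) (ha : Summable fun n ↦ a n * y ^ n) :
    HasDerivAt (fun x ↦ ∑' n, a n * x ^ n) (a 1) 0 := by
  have hseries : HasFPowerSeriesAt (ofScalarsSum a : 𝕜 → 𝕜) (ofScalars 𝕜 a) 0 :=
    ((ofScalars 𝕜 a).hasFPowerSeriesOnBall
      (radius_ofScalars_pos_of_summable hy ha)).hasFPowerSeriesAt
  simpa [ofScalarsSum_eq_tsum, ofScalars_apply_eq] using hseries.hasDerivAt

theorem hasDerivWithinAt_of_hasSum_mul_pow {f u : 𝕜 → 𝕜} {u' x : 𝕜} {S : Set 𝕜}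
    (hy : y ≠ 0) (ha : Summable fun n ↦ a n * y ^ n) (hx : x ∈ S)
    (hu : HasDerivWithinAt u u' S x) (hux : u x = 0)
    (hf : ∀ᶠ t in 𝓝[S] x, HasSum (fun n ↦ a n * u t ^ n) (f t)) :
    HasDerivWithinAt f (a 1 * u') S x := by
  have hsum := hasDerivAt_tsum_mul_pow_zero hy ha
  rw [← hux] at hsum
  have hf_eq : f =ᶠ[𝓝[S] x] (fun v ↦ ∑' n, a n * v ^ n) ∘ u :=
    hf.mono fun _ ht ↦ ht.tsum_eq.symm
  exact (hsum.comp_hasDerivWithinAt x hu).congr_of_eventuallyEq_of_mem hf_eq hx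

end PowerSeries

theorem hasDerivAt_cos_sq_pi_div_two :
    HasDerivAt (fun θ ↦ Real.cos θ ^ 2) 0 (Real.pi / 2) := by
  simpa using (Real.hasDerivAt_cos (Real.pi / 2)).fun_pow 2

theorem exists_cos_pos_of_eventually_nhdsLE_pi_div_two {p : ℝ → Prop}
    (hp : ∀ᶠ θ in 𝓝[≤] (Real.pi / 2), p θ) : ∃ θ, 0 < Real.cos θ ∧ p θ := by
  have hp_left : ∀ᶠ θ in 𝓝[<] (Real.pi / 2), p θ :=
    hp.filter_mono (nhdsWithin_mono _ Iio_subset_Iic_self)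
  have hIoo : Ioo (-(Real.pi / 2)) (Real.pi / 2) ∈ 𝓝[<] (Real.pi / 2) :=
    Ioo_mem_nhdsLT (by linarith [Real.pi_pos])
  obtain ⟨θ, hpθ, hθ⟩ := (hp_left.and hIoo).exists
  exact ⟨θ, Real.cos_pos_of_mem_Ioo hθ, hpθ⟩

theorem hasDerivWithinAt_pi_div_two_of_hasSum_mul_cos_pow {a : ℕ → ℝ} {f : ℝ → ℝ}
    (hf : ∀ᶠ θ in 𝓝[≤] (Real.pi / 2), HasSum (fun n ↦ a n * Real.cos θ ^ (2 * n)) (f θ)) :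
    HasDerivWithinAt f 0 (Iic (Real.pi / 2)) (Real.pi / 2) := by
  simp only [pow_mul] at hf
  obtain ⟨θ, hcos, hθ⟩ := exists_cos_pos_of_eventually_nhdsLE_pi_div_two hf
  simpa using hasDerivWithinAt_of_hasSum_mul_pow (pow_pos hcos 2).ne' hθ.summable self_mem_Iic
    hasDerivAt_cos_sq_pi_div_two.hasDerivWithinAt (by simp) hf

theorem no_nonneg_power_series_for_geodesic_riesz_general (s : ℝ) (hs : s ≠ 0) :
    ¬ ∃ a : ℕ → ℝ, ∀ᶠ θ in 𝓝[≤] (Real.pi / 2),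
      HasSum (fun n ↦ a n * Real.cos θ ^ (2 * n)) (θ ^ (-s)) := by
  rintro ⟨a, ha⟩
  have hpi : 0 < Real.pi / 2 := Real.pi_div_two_pos
  have hderiv : HasDerivAt (fun θ : ℝ ↦ θ ^ (-s)) (-s * (Real.pi / 2) ^ (-s - 1)) (Real.pi / 2) :=
    Real.hasDerivAt_rpow_const (Or.inl hpi.ne')
  have hzero : -s * (Real.pi / 2) ^ (-s - 1) = 0 :=
    (uniqueDiffWithinAt_Iic _).eq_deriv _ hderiv.hasDerivWithinAt
      (hasDerivWithinAt_pi_div_two_of_hasSum_mul_cos_pow ha)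
  exact mul_ne_zero (neg_ne_zero.mpr hs) (Real.rpow_pos_of_pos hpi _).ne' hzero

theorem no_nonneg_power_series_for_geodesic_riesz (s : ℝ) (hs : 0 < s) :
    ¬ ∃ a : ℕ → ℝ, (∀ n, 0 ≤ a n) ∧
      ∀ θ ∈ Set.Ioc (0 : ℝ) (Real.pi / 2),
        HasSum (fun n => a n * Real.cos θ ^ (2 * n)) (θ ^ (-s)) := fun ⟨a, _, ha⟩ ↦
  no_nonneg_power_series_for_geodesic_riesz_general s hs.ne'
    ⟨a, Filter.mem_of_superset (Ioc_mem_nhdsLE Real.pi_div_two_pos) ha⟩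
end
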